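/- The maximum of the left-focal Green's function over its domain equals (b − a − 1)/(α − 1); that is, G_l(t, s) ≤ (b − a − 1)/(α − 1) for all a+1 ≤ t ≤ b and a+2 ≤ s ≤ b, and G_l(a+1, a+2) = (b − a − 1)/(α − 1). -/

import Mathlib

/-- Rising factorial `rf x r = Γ(x+r)/Γ(x)`, with the convention `rf 0 r = 0`. -/
noncomputable def rf (x r : ℝ) : ℝ := if x = 0 then 0 else Real.Gamma (x + r) / Real.Gamma x

/-- The left-focal Green's function. -/
noncomputable def Gl (a b : ℤ) (α : ℝ) (t s : ℤ) : ℝ :=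
  if t ≤ s - 1 then
    (1 / Real.Gamma α) *
      (rf (b - s + 1 : ℝ) (α - 1) * rf (t - a : ℝ) (α - 2) / rf (b - a : ℝ) (α - 2))
  else
    (1 / Real.Gamma α) *
      (rf (b - s + 1 : ℝ) (α - 1) * rf (t - a : ℝ) (α - 2) / rf (b - a : ℝ) (α - 2) -
        rf (t - s + 1 : ℝ) (α - 1))

/-!
Dropping the nonnegative term that is subtracted when `s ≤ t`, the Green's function is
bounded by its expression for `t < s`. Since `log ∘ Γ` is convex, `x ↦ Γ(x + r) / Γ(x)` is
increasing for `r ≥ 0` and decreasing for `r ≤ 0`, so for `1 < α < 2` that expression decreases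
both in `t` and in `s` and is largest at `(a + 1, a + 2)`. There the identity
`rf x (r + 1) = x * rf (x + 1) r` makes the quotient of rising factorials collapse.
-/

open Set

theorem map_add_sub_map_le_of_convexOn {𝕜 : Type*} [Field 𝕜] [LinearOrder 𝕜]
    [IsStrictOrderedRing 𝕜] {S : Set 𝕜} {f : 𝕜 → 𝕜} (hf : ConvexOn 𝕜 S f) {x y r : 𝕜}
    (hx : x ∈ S) (hyr : y + r ∈ S) (hxy : x ≤ y) (hr : 0 ≤ r) :
    f (x + r) - f x ≤ f (y + r) - f y := by
  rcases hxy.eq_or_lt with rfl | hlt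
  · rfl
  have hd : 0 < y - x + r := by linarith
  have hu : 0 ≤ (y - x) / (y - x + r) := div_nonneg (by linarith) hd.le
  have hv : 0 ≤ r / (y - x + r) := div_nonneg hr hd.le
  have huv : (y - x) / (y - x + r) + r / (y - x + r) = 1 := by field
  -- `x + r` and `y` are the combinations of `x` and `y + r` with exchanged weights.
  have h_left := hf.2 hx hyr hu hv huv
  have h_right := hf.2 hx hyr hv hu (by rwa [add_comm])
  simp only [smul_eq_mul] at h_left h_right
  rw [show (y - x) / (y - x + r) * x + r / (y - x + r) * (y + r) = x + r by field] at h_left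
  rw [show r / (y - x + r) * x + (y - x) / (y - x + r) * (y + r) = y by field] at h_right
  linear_combination h_left + h_right + (f x + f (y + r)) * huv

section RisingFactorial

variable {x r : ℝ}

theorem rf_of_ne_zero (hx : x ≠ 0) : rf x r = Real.Gamma (x + r) / Real.Gamma x :=
  if_neg hx

theorem rf_pos (hx : 0 < x) (hxr : 0 < x + r) : 0 < rf x r := by
  rw [rf_of_ne_zero hx.ne']
  exact div_pos (Real.Gamma_pos_of_pos hxr) (Real.Gamma_pos_of_pos hx)

theorem rf_one_left (r : ℝ) : rf 1 r = Real.Gamma (1 + r) := by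
  rw [rf_of_ne_zero one_ne_zero, Real.Gamma_one, div_one]

theorem rf_add_one_right (hx : x ≠ 0) (hx1 : x + 1 ≠ 0) (r : ℝ) :
    rf x (r + 1) = x * rf (x + 1) r := by
  rw [rf_of_ne_zero hx, rf_of_ne_zero hx1, Real.Gamma_add_one hx, mul_div_assoc',
    mul_div_mul_left _ _ hx, add_assoc, add_comm 1 r]

theorem rf_eq_inv_rf_neg (hx : x ≠ 0) (hxr : x + r ≠ 0) : rf x r = (rf (x + r) (-r))⁻¹ := by
  rw [rf_of_ne_zero hx, rf_of_ne_zero hxr, add_neg_cancel_right, inv_div]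

theorem rf_monotoneOn (hr : 0 ≤ r) : MonotoneOn (fun x ↦ rf x r) (Ioi 0) := by
  intro x (hx : 0 < x) y (hy : 0 < y) hxy
  have hΓ {z : ℝ} (hz : 0 < z) : 0 < Real.Gamma z := Real.Gamma_pos_of_pos hz
  have hxr : 0 < x + r := by linarith
  have hyr : 0 < y + r := by linarith
  have h_increment :
      Real.log (Real.Gamma (x + r)) - Real.log (Real.Gamma x) ≤
        Real.log (Real.Gamma (y + r)) - Real.log (Real.Gamma y) :=
    map_add_sub_map_le_of_convexOn Real.convexOn_log_Gamma hx hyr hxy hr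
  rw [← Real.log_div (hΓ hxr).ne' (hΓ hx).ne', ← Real.log_div (hΓ hyr).ne' (hΓ hy).ne',
    ← rf_of_ne_zero hx.ne', ← rf_of_ne_zero hy.ne'] at h_increment
  exact (Real.log_le_log_iff (rf_pos hx hxr) (rf_pos hy hyr)).1 h_increment

theorem rf_antitoneOn (hr : r ≤ 0) : AntitoneOn (fun x ↦ rf x r) (Ioi (-r)) := by
  intro x (hx : -r < x) y (hy : -r < y) hxy
  have hxr : 0 < x + r := by linarith
  have hyr : 0 < y + r := by linarith
  have h_mono : rf (x + r) (-r) ≤ rf (y + r) (-r) :=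
    rf_monotoneOn (neg_nonneg.2 hr) hxr hyr (by gcongr)
  have h_pos : 0 < rf (x + r) (-r) := rf_pos hxr (by linarith)
  calc rf y r = (rf (y + r) (-r))⁻¹ := rf_eq_inv_rf_neg (by linarith) hyr.ne'
    _ ≤ (rf (x + r) (-r))⁻¹ := inv_anti₀ h_pos h_mono
    _ = rf x r := (rf_eq_inv_rf_neg (by linarith) hxr.ne').symm

end RisingFactorial

/-- The expression giving the left-focal Green's function for `t < s`, as a function of real
arguments; for `s ≤ t` the Green's function subtracts a further nonnegative term from it. -/
noncomputable def upperGl (a b α t s : ℝ) : ℝ :=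
  (1 / Real.Gamma α) * (rf (b - s + 1) (α - 1) * rf (t - a) (α - 2) / rf (b - a) (α - 2))

theorem Gl_eq_upperGl_of_lt {t s : ℤ} (a b : ℤ) (α : ℝ) (hts : t < s) :
    Gl a b α t s = upperGl a b α t s :=
  if_pos (Int.le_sub_one_of_lt hts)

theorem Gl_le_upperGl {α : ℝ} (hα : 0 < α) (a b t s : ℤ) :
    Gl a b α t s ≤ upperGl a b α t s := by
  rcases lt_or_ge t s with hts | hst
  · exact (Gl_eq_upperGl_of_lt a b α hts).le
  have hst' : (s : ℝ) ≤ t := by exact_mod_cast hst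
  have h_sub : 0 < rf (t - s + 1 : ℝ) (α - 1) := rf_pos (by linarith) (by linarith)
  rw [Gl, if_neg (by omega), upperGl]
  gcongr
  exact sub_le_self _ h_sub.le

section UpperGl

variable {a b α : ℝ}

theorem upperGl_anti {t₁ t₂ s₁ s₂ : ℝ} (hα1 : 1 ≤ α) (hα2 : α ≤ 2) (hab : 2 - α < b - a)
    (ht₁ : 2 - α < t₁ - a) (ht : t₁ ≤ t₂) (hs : s₁ ≤ s₂) (hs₂ : s₂ < b + 1) :
    upperGl a b α t₂ s₂ ≤ upperGl a b α t₁ s₁ := by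
  have h_in_s : rf (b - s₂ + 1) (α - 1) ≤ rf (b - s₁ + 1) (α - 1) :=
    rf_monotoneOn (by linarith) (mem_Ioi.2 (by linarith)) (mem_Ioi.2 (by linarith)) (by gcongr)
  have h_in_t : rf (t₂ - a) (α - 2) ≤ rf (t₁ - a) (α - 2) :=
    rf_antitoneOn (by linarith) (mem_Ioi.2 (by linarith)) (mem_Ioi.2 (by linarith)) (by gcongr)
  have h_pos_s : 0 < rf (b - s₁ + 1) (α - 1) := rf_pos (by linarith) (by linarith)
  have h_pos_t : 0 < rf (t₂ - a) (α - 2) := rf_pos (by linarith) (by linarith)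
  have h_pos_ab : 0 < rf (b - a) (α - 2) := rf_pos (by linarith) (by linarith)
  have hΓ : 0 ≤ 1 / Real.Gamma α := one_div_nonneg.2 (Real.Gamma_pos_of_pos (by linarith)).le
  refine mul_le_mul_of_nonneg_left ?_ hΓ
  gcongr

theorem upperGl_corner (hα : 1 < α) (hab : 1 < b - a) :
    upperGl a b α (a + 1) (a + 2) = (b - a - 1) / (α - 1) := by
  have h_num : rf (b - (a + 2) + 1) (α - 1) = (b - a - 1) * rf (b - a) (α - 2) := by
    have hx : b - a - 1 ≠ 0 := (sub_pos.2 hab).ne'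
    convert rf_add_one_right hx (by linarith) (α - 2) using 2 <;> ring_nf
  have h_one : rf (a + 1 - a) (α - 2) = Real.Gamma (α - 1) := by
    rw [add_sub_cancel_left, rf_one_left]
    ring_nf
  have h_Gamma : Real.Gamma α = (α - 1) * Real.Gamma (α - 1) := by
    simpa using Real.Gamma_add_one (sub_pos.2 hα).ne'
  have h_rf_ne : rf (b - a) (α - 2) ≠ 0 := (rf_pos (by linarith) (by linarith)).ne'
  have h_Gamma_ne : Real.Gamma (α - 1) ≠ 0 := (Real.Gamma_pos_of_pos (sub_pos.2 hα)).ne'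
  have hα_ne : α - 1 ≠ 0 := (sub_pos.2 hα).ne'
  rw [upperGl, h_num, h_one, h_Gamma]
  field

end UpperGl

theorem left_focal_green_max (a b : ℤ) (hab : 2 ≤ b - a) (α : ℝ)
    (hα1 : 1 < α) (hα2 : α < 2) :
    (∀ t s : ℤ, a + 1 ≤ t → t ≤ b → a + 2 ≤ s → s ≤ b →
      Gl a b α t s ≤ (b - a - 1 : ℝ) / (α - 1)) ∧
    Gl a b α (a + 1) (a + 2) = (b - a - 1 : ℝ) / (α - 1) := by
  have hab' : (2 : ℝ) ≤ b - a := by exact_mod_cast hab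
  have h_corner : upperGl a b α (a + 1) (a + 2) = (b - a - 1) / (α - 1) :=
    upperGl_corner hα1 (by linarith)
  constructor
  · intro t s hat _ has hsb
    have hat' : (a + 1 : ℝ) ≤ t := by exact_mod_cast hat
    have has' : (a + 2 : ℝ) ≤ s := by exact_mod_cast has
    have hsb' : (s : ℝ) ≤ b := by exact_mod_cast hsb
    calc Gl a b α t s ≤ upperGl a b α t s := Gl_le_upperGl (by linarith) a b t s
      _ ≤ upperGl a b α (a + 1) (a + 2) :=
        upperGl_anti hα1.le hα2.le (by linarith) (by linarith) hat' has' (by linarith)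
      _ = (b - a - 1) / (α - 1) := h_corner
  · rw [Gl_eq_upperGl_of_lt a b α (by omega), ← h_corner]
    push_cast
    rfl
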